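/- arXiv:2004.07096 — 2 statements merged into one kernel-verified Lean document; each statement's English description precedes it below -/
import Mathlib

section
/- Let 0 < m ≤ 1 and for u, v ∈ ℝ define the boundary term 𝔟[u^m, v^m] := (m/(1+m))(|v|^(1+m) − |u|^(1+m)) − u (v^m − u^m). Then there exists a constant c = c(m) > 0 such that for all u, v ∈ ℝ: (1/c) |u^((1+m)/2) − v^((1+m)/2)|² ≤ 𝔟[u^m, v^m] ≤ c |u^((1+m)/2) − v^((1+m)/2)|². -/
/-!
Put `x = |u|^((1+m)/2)`, `y = |v|^((1+m)/2)`, `β = 2m/(1+m) ∈ (0, 1]` and `T = |u| |v|^m`, so that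
`T = x^(2-β) y^β`. Then `𝔟[u^m, v^m] = ((2-β) x² + β y²)/2 ∓ T`, with the sign `-` when `u` and `v`
have the same sign and `+` otherwise, while the signed powers differ by `|x - y|`, respectively
`x + y`.

Weighted AM-GM, used once for `x^(1-β) y^β` and once for `y^(1-β) x^β`, gives
`T ≤ (1-β) x² + β x y` and `x² y ≤ T ((1-β) y + β x)` (`cross_bounds`). The first yields
`𝔟 ≥ (β/2)(x-y)²` for equal signs; the second yields `𝔟 ≤ (x-y)²`, because
`((2-β) x² + β y²)((1-β) y + β x) - 2 x² y = β (x-y)² ((2-β) x + (1-β) y)`. For opposite signs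
`0 ≤ T ≤ ((2-β) x² + β y²)/2` is enough. All cases are covered by `c = 4/β`.
-/

/-- Signed power: `a^k := |a|^(k-1) a`. -/
noncomputable def spow (a k : ℝ) : ℝ := |a| ^ (k - 1) * a

/-- The boundary term `𝔟[u^m, v^m]`. -/
noncomputable def bterm (m u v : ℝ) : ℝ :=
  m / (1 + m) * (|v| ^ (1 + m) - |u| ^ (1 + m)) - u * (spow v m - spow u m)

lemma spow_of_nonneg {a k : ℝ} (ha : 0 ≤ a) (hk : 0 < k) : spow a k = a ^ k := by
  unfold spow
  rcases ha.eq_or_lt with rfl | ha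
  · simp [Real.zero_rpow hk.ne']
  · rw [abs_of_pos ha, Real.rpow_sub_one ha.ne', div_mul_cancel₀ _ ha.ne']

lemma spow_neg (a k : ℝ) : spow (-a) k = -spow a k := by
  simp [spow]

lemma bterm_neg_neg (m u v : ℝ) : bterm m (-u) (-v) = bterm m u v := by
  simp only [bterm, spow_neg, abs_neg]; ring

/-- The two weighted AM-GM estimates for the cross term `T = x^(2-β) y^β`. -/
lemma cross_bounds {x y β : ℝ} (hx : 0 ≤ x) (hy : 0 ≤ y) (h0 : 0 < β) (h1 : β ≤ 1) :
    x ^ (2 - β) * y ^ β ≤ (1 - β) * x ^ 2 + β * (x * y) ∧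
      x ^ 2 * y ≤ x ^ (2 - β) * y ^ β * ((1 - β) * y + β * x) := by
  have A := Real.geom_mean_le_arith_mean2_weighted (sub_nonneg.2 h1) h0.le hx hy (by ring)
  have B := Real.geom_mean_le_arith_mean2_weighted (sub_nonneg.2 h1) h0.le hy hx (by ring)
  have e1 : x ^ (2 - β) = x * x ^ (1 - β) := by
    rw [show (2 - β) = 1 + (1 - β) by ring,
      Real.rpow_add_of_nonneg hx zero_le_one (by linarith), Real.rpow_one]
  have e2 : ∀ z : ℝ, 0 ≤ z → z ^ (1 - β) * z ^ β = z := fun z hz => by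
    rw [← Real.rpow_add_of_nonneg hz (by linarith) h0.le]; simp
  constructor
  · rw [e1]
    nlinarith [mul_le_mul_of_nonneg_left A hx]
  · have hT : 0 ≤ x ^ (2 - β) * y ^ β := by positivity
    calc x ^ 2 * y = x * (x ^ (1 - β) * x ^ β) * (y ^ (1 - β) * y ^ β) := by
          rw [e2 x hx, e2 y hy]; ring
      _ = x ^ (2 - β) * y ^ β * (y ^ (1 - β) * x ^ β) := by rw [e1]; ring
      _ ≤ _ := mul_le_mul_of_nonneg_left B hT

/-- The equal-sign case, in terms of `x`, `y` and the cross term `T`. -/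
lemma same_sign_bounds {x y β T : ℝ} (hx : 0 ≤ x) (hy : 0 ≤ y) (h0 : 0 < β) (h1 : β ≤ 1)
    (hT : 0 ≤ T) (hA : T ≤ (1 - β) * x ^ 2 + β * (x * y))
    (hB : x ^ 2 * y ≤ T * ((1 - β) * y + β * x)) :
    β / 2 * (x - y) ^ 2 ≤ ((2 - β) * x ^ 2 + β * y ^ 2) / 2 - T ∧
      ((2 - β) * x ^ 2 + β * y ^ 2) / 2 - T ≤ (x - y) ^ 2 := by
  constructor
  · nlinarith
  · rcases hx.eq_or_lt with rfl | hx
    · nlinarith [sq_nonneg y]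
    · have hD : 0 < (1 - β) * y + β * x :=
        add_pos_of_nonneg_of_pos (mul_nonneg (by linarith) hy) (mul_pos h0 hx)
      have key : (((2 - β) * x ^ 2 + β * y ^ 2) / 2) * ((1 - β) * y + β * x) - x ^ 2 * y
          = (x - y) ^ 2 * (β * ((2 - β) * x + (1 - β) * y) / 2) := by ring
      have hle : β * ((2 - β) * x + (1 - β) * y) / 2 ≤ (1 - β) * y + β * x := by
        have : 0 ≤ (1 - β) * y := mul_nonneg (by linarith) hy
        nlinarith [mul_pos h0 hx, mul_pos (mul_pos h0 h0) hx,
          mul_nonneg (sub_nonneg.2 h1) this]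
      refine le_of_mul_le_mul_right ?_ hD
      nlinarith [mul_le_mul_of_nonneg_left hle (sq_nonneg (x - y))]

/-- For `0 < m ≤ 1` there is `c = c(m) > 0` such that for all `u, v ∈ ℝ`:
`(1/c)|u^((1+m)/2) − v^((1+m)/2)|² ≤ 𝔟[u^m, v^m] ≤ c|u^((1+m)/2) − v^((1+m)/2)|²`. -/
theorem boundary_term_equivalence (m : ℝ) (hm0 : 0 < m) (hm1 : m ≤ 1) :
    ∃ c : ℝ, 0 < c ∧ ∀ u v : ℝ,
      (1 / c) * |spow u ((1 + m) / 2) - spow v ((1 + m) / 2)| ^ 2 ≤ bterm m u v ∧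
      bterm m u v ≤ c * |spow u ((1 + m) / 2) - spow v ((1 + m) / 2)| ^ 2 := by
  have hp : 0 < 1 + m := by linarith
  obtain ⟨β, hβ⟩ : ∃ β, β = 2 * m / (1 + m) := ⟨_, rfl⟩
  have h0 : 0 < β := by rw [hβ]; positivity
  have h1 : β ≤ 1 := by rw [hβ, div_le_one hp]; linarith
  have hc : 4 ≤ 4 / β := by rw [le_div_iff₀ h0]; linarith
  refine ⟨4 / β, by positivity, ?_⟩
  have hinv : 1 / (4 / β) = β / 4 := by field_simp
  simp only [sq_abs, hinv]
  have hk : 0 < (1 + m) / 2 := by linarith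
  -- For nonnegative `a`, `b`: the bounds in the variables `x`, `y`, `T`.
  have main : ∀ a b : ℝ, 0 ≤ a → 0 ≤ b → ∃ x y T : ℝ, 0 ≤ x ∧ 0 ≤ y ∧ 0 ≤ T ∧
      a ^ ((1 + m) / 2) = x ∧ b ^ ((1 + m) / 2) = y ∧ a * b ^ m = T ∧
      a ^ (1 + m) = x ^ 2 ∧ b ^ (1 + m) = y ^ 2 ∧
      β / 2 * (x - y) ^ 2 ≤ ((2 - β) * x ^ 2 + β * y ^ 2) / 2 - T ∧
      ((2 - β) * x ^ 2 + β * y ^ 2) / 2 - T ≤ (x - y) ^ 2 := by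
    intro a b ha hb
    have hx : 0 ≤ a ^ ((1 + m) / 2) := by positivity
    have hy : 0 ≤ b ^ ((1 + m) / 2) := by positivity
    have hsq : ∀ z : ℝ, 0 ≤ z → z ^ (1 + m) = (z ^ ((1 + m) / 2)) ^ 2 := fun z hz => by
      rw [← Real.rpow_natCast, ← Real.rpow_mul hz]; congr 1; push_cast; ring
    have hT : (a ^ ((1 + m) / 2)) ^ (2 - β) * (b ^ ((1 + m) / 2)) ^ β = a * b ^ m := by
      rw [← Real.rpow_mul ha, ← Real.rpow_mul hb,
        show (1 + m) / 2 * (2 - β) = 1 by rw [hβ]; field_simp; ring,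
        show (1 + m) / 2 * β = m by rw [hβ]; field_simp, Real.rpow_one]
    obtain ⟨hA, hB⟩ := cross_bounds hx hy h0 h1
    rw [hT] at hA hB
    have hT0 : 0 ≤ a * b ^ m := by positivity
    exact ⟨_, _, _, hx, hy, hT0, rfl, rfl, rfl, hsq a ha, hsq b hb,
      same_sign_bounds hx hy h0 h1 hT0 hA hB⟩
  have hb2 : m / (1 + m) = β / 2 := by rw [hβ]; ring
  have hself : ∀ a : ℝ, 0 ≤ a → a * a ^ m = a ^ (1 + m) := fun a ha => by
    rw [Real.rpow_add_of_nonneg ha zero_le_one hm0.le, Real.rpow_one]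
  have same : ∀ a b : ℝ, 0 ≤ a → 0 ≤ b →
      β / 4 * (spow a ((1 + m) / 2) - spow b ((1 + m) / 2)) ^ 2 ≤ bterm m a b ∧
      bterm m a b ≤ 4 / β * (spow a ((1 + m) / 2) - spow b ((1 + m) / 2)) ^ 2 := by
    intro a b ha hb
    obtain ⟨x, y, T, hx, hy, hT, ex, ey, eT, ea, eb, L, U⟩ := main a b ha hb
    have hbt : bterm m a b = ((2 - β) * x ^ 2 + β * y ^ 2) / 2 - T := by
      rw [bterm, spow_of_nonneg ha hm0, spow_of_nonneg hb hm0, abs_of_nonneg ha,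
        abs_of_nonneg hb, mul_sub a, hself a ha, ea, eb, eT, hb2]
      ring
    rw [hbt, spow_of_nonneg ha hk, spow_of_nonneg hb hk, ex, ey]
    have hs := sq_nonneg (x - y)
    constructor
    · nlinarith [mul_nonneg h0.le hs]
    · nlinarith [mul_le_mul_of_nonneg_right hc hs]
  have opp : ∀ a b : ℝ, 0 ≤ a → 0 ≤ b →
      β / 4 * (spow a ((1 + m) / 2) - spow (-b) ((1 + m) / 2)) ^ 2 ≤ bterm m a (-b) ∧
      bterm m a (-b) ≤ 4 / β * (spow a ((1 + m) / 2) - spow (-b) ((1 + m) / 2)) ^ 2 := by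
    intro a b ha hb
    obtain ⟨x, y, T, hx, hy, hT, ex, ey, eT, ea, eb, L, U⟩ := main a b ha hb
    have hbt : bterm m a (-b) = ((2 - β) * x ^ 2 + β * y ^ 2) / 2 + T := by
      rw [bterm, spow_neg, spow_of_nonneg ha hm0, spow_of_nonneg hb hm0, abs_neg,
        abs_of_nonneg ha, abs_of_nonneg hb, mul_sub a, hself a ha, mul_neg, ea, eb, eT, hb2]
      ring
    rw [hbt, spow_neg, spow_of_nonneg ha hk, spow_of_nonneg hb hk, ex, ey, sub_neg_eq_add]
    have hs := sq_nonneg (x + y)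
    have hx2 := sq_nonneg x
    have hy2 := sq_nonneg y
    constructor
    · nlinarith [mul_nonneg h0.le (sq_nonneg (x - y)), mul_nonneg (sub_nonneg.2 h1) hx2]
    · have hT' : T ≤ ((2 - β) * x ^ 2 + β * y ^ 2) / 2 := by
        nlinarith [mul_nonneg h0.le (sq_nonneg (x - y))]
      nlinarith [mul_le_mul_of_nonneg_right hc hs, mul_nonneg hx hy,
        mul_nonneg h0.le hx2, mul_nonneg (sub_nonneg.2 h1) hy2]
  -- Both sides are invariant under `(u, v) ↦ (-u, -v)`.
  have flip : ∀ u v : ℝ, (spow (-u) ((1 + m) / 2) - spow (-v) ((1 + m) / 2)) ^ 2 =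
      (spow u ((1 + m) / 2) - spow v ((1 + m) / 2)) ^ 2 := fun u v => by
    rw [spow_neg, spow_neg]; ring
  intro u v
  rcases le_total 0 u with hu | hu <;> rcases le_total 0 v with hv | hv
  · exact same u v hu hv
  · simpa only [neg_neg] using opp u (-v) hu (neg_nonneg.2 hv)
  · have := opp (-u) v (neg_nonneg.2 hu) hv
    rwa [flip, bterm_neg_neg] at this
  · have := same (-u) (-v) (neg_nonneg.2 hu) (neg_nonneg.2 hv)
    rwa [flip, bterm_neg_neg] at this
end

section
/- Let 0 < m ≤ 1. There exists a constant c = c(m) > 0 such that for all u, a ∈ ℝ one has |u − a|^(1+m) ≤ c |u^((1+m)/2) − a^((1+m)/2)|² + c |a|^(1+m). -/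
theorem abs_spow (x k : ℝ) (hk : 0 < k) : |spow x k| = |x| ^ k := by
  unfold spow
  rcases eq_or_ne x 0 with rfl | hx
  · simp [Real.zero_rpow hk.ne']
  · have hxpos : 0 < |x| := abs_pos.mpr hx
    rw [abs_mul, abs_of_nonneg (Real.rpow_nonneg hxpos.le _), Real.rpow_sub_one (abs_ne_zero.mpr hx),
      div_mul_cancel₀ _ (abs_ne_zero.mpr hx)]

/-- For `0 < m ≤ 1` there is `c = c(m) > 0` such that for all `u, a ∈ ℝ`:
`|u − a|^(1+m) ≤ c |u^((1+m)/2) − a^((1+m)/2)|² + c |a|^(1+m)`. -/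
theorem elementary_power_estimate (m : ℝ) (hm0 : 0 < m) (hm1 : m ≤ 1) :
    ∃ c : ℝ, 0 < c ∧ ∀ u a : ℝ,
      |u - a| ^ (1 + m) ≤
        c * |spow u ((1 + m) / 2) - spow a ((1 + m) / 2)| ^ 2 + c * |a| ^ (1 + m) := by
  refine ⟨8, by norm_num, fun u a => ?_⟩
  have hsq : ∀ x : ℝ, |x| ^ (1 + m) = (|x| ^ ((1 + m) / 2)) ^ 2 := fun x => by
    rw [← Real.rpow_mul_natCast (abs_nonneg x)]
    congr 1
    push_cast
    ring
  rw [hsq, hsq]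
  have hk : 0 < (1 + m) / 2 := by linarith
  have hk1 : (1 + m) / 2 ≤ 1 := by linarith
  generalize (1 + m) / 2 = k at hk hk1 ⊢
  have hsub : |u - a| ^ k ≤ |u| ^ k + |a| ^ k :=
    (Real.rpow_le_rpow (abs_nonneg _) (abs_sub u a) hk.le).trans
      (Real.rpow_add_le_add_rpow (abs_nonneg _) (abs_nonneg _) hk.le hk1)
  have htri := abs_sub_abs_le_abs_sub (spow u k) (spow a k)
  rw [abs_spow u k hk, abs_spow a k hk] at htri
  have h0 : 0 ≤ |u - a| ^ k := Real.rpow_nonneg (abs_nonneg _) _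
  generalize |spow u k - spow a k| = D at htri ⊢
  have hle : |u - a| ^ k ≤ D + 2 * |a| ^ k := by linarith
  -- `(D + 2A)² ≤ 2D² + 8A²`
  nlinarith [pow_le_pow_left₀ h0 hle 2, sq_nonneg (D - 2 * |a| ^ k), sq_nonneg D]
end
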